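/- Let S ∈ ℝ^{p×p} be symmetric, λ > 0, and let Θ* be a symmetric positive definite p×p matrix. Then Θ* minimizes the graphical lasso objective F(Θ) = −log det Θ + trace(SΘ) + λ Σ_{i≠j} |θ_{ij}| over symmetric positive definite matrices if and only if there exists a symmetric matrix Φ ∈ ℝ^{p×p} with Φ_{ii} = 0 for all i, |Φ_{ij}| ≤ 1 for all i ≠ j, Φ_{ij} = sign(θ*_{ij}) whenever i ≠ j and θ*_{ij} ≠ 0, such that (Θ*)^{−1} − S − λΦ = 0. -/

import Mathlib

open Matrix Finset

/-- The graphical lasso objective `F(Θ) = -log det Θ + trace(SΘ) + λ Σ_{i≠j} |θ_ij|`. -/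
noncomputable def glObj {p : ℕ} (S : Matrix (Fin p) (Fin p) ℝ) (l : ℝ)
    (Θ : Matrix (Fin p) (Fin p) ℝ) : ℝ :=
  -Real.log Θ.det + (S * Θ).trace + l * ∑ i, ∑ j, (if i ≠ j then |Θ i j| else 0)

/-! The objective is `f + l * offDiagL1` with `f Θ = -log det Θ + trace (S * Θ)` convex and
differentiable and `offDiagL1` convex but nonsmooth. Comparing one-sided directional derivatives,
`Θ` is a minimizer iff `-∇f(Θ) = Θ⁻¹ - S` is `l` times a subgradient of `offDiagL1` at `Θ`, tested
against symmetric directions. The convexity of `-log det` enters only through the inequality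
`log (det B) ≤ log (det A) + trace (A⁻¹ * (B - A))`, which is `log μ ≤ μ - 1` summed over the
eigenvalues of `C * B * Cᴴ`, where `Cᴴ * C = A⁻¹`. Finally `offDiagL1` is separable, so perturbing
one symmetric pair of entries at a time reduces its subgradients to those of the absolute value on
`ℝ`. -/

open scoped Topology

section CompositeMinimization

variable {E : Type*} [AddCommGroup E] [Module ℝ E] {f g : E → ℝ} {x : E}

lemma sub_lineDeriv_le_of_eventually_le {s : Set E} {d : ℝ} {y : E}
    (hf : HasLineDerivAt ℝ f d x (y - x)) (hg : ConvexOn ℝ s g) (hx : x ∈ s) (hy : y ∈ s)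
    (hmin : ∀ᶠ t : ℝ in 𝓝[>] 0, f x + g x ≤ f (x + t • (y - x)) + g (x + t • (y - x))) :
    g x - d ≤ g y := by
  suffices g x - g y ≤ d by linarith
  refine ge_of_tendsto hf.tendsto_slope_zero_right ?_
  filter_upwards [hmin, Ioo_mem_nhdsGT one_pos] with t hle ⟨ht₀, ht₁⟩
  have hconv : g (x + t • (y - x)) ≤ (1 - t) * g x + t * g y := by
    have hcomb : x + t • (y - x) = (1 - t) • x + t • y := by module
    rw [hcomb]
    exact hg.2 hx hy (sub_nonneg.2 ht₁.le) ht₀.le (sub_add_cancel 1 t)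
  rw [smul_eq_mul, ← div_eq_inv_mul, le_div_iff₀ ht₀]
  linarith

theorem isMinOn_add_iff_forall_sub_lineDeriv_le {s w : Set E} {f' : E → ℝ}
    (hx : x ∈ s) (hsw : s ⊆ w)
    (hs : ∀ y ∈ w, ∀ᶠ t : ℝ in 𝓝[>] 0, x + t • (y - x) ∈ s)
    (hf : ∀ y ∈ w, HasLineDerivAt ℝ f (f' (y - x)) x (y - x))
    (htangent : ∀ y ∈ s, f x + f' (y - x) ≤ f y) (hg : ConvexOn ℝ w g) :
    IsMinOn (fun y ↦ f y + g y) s x ↔ ∀ y ∈ w, g x - f' (y - x) ≤ g y := by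
  refine ⟨fun hmin y hy ↦ ?_, fun hsub y hy ↦ ?_⟩
  · exact sub_lineDeriv_le_of_eventually_le (hf y hy) hg (hsw hx) hy
      ((hs y hy).mono fun _ ht ↦ hmin ht)
  · have := htangent y hy
    have := hsub y (hsw hy)
    simp only [Set.mem_ofPred_eq]
    linarith

end CompositeMinimization

lemma sign_mul_self_eq_abs (x : ℝ) : x.sign * x = |x| := by
  rcases lt_trichotomy x 0 with hx | rfl | hx
  · rw [Real.sign_of_neg hx, abs_of_neg hx, neg_one_mul]
  · simp
  · rw [Real.sign_of_pos hx, abs_of_pos hx, one_mul]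

lemma mul_le_abs_of_abs_le_one {a b : ℝ} (ha : |a| ≤ 1) : a * b ≤ |b| :=
  calc a * b ≤ |a| * |b| := (le_abs_self _).trans_eq (abs_mul a b)
    _ ≤ |b| := mul_le_of_le_one_left (abs_nonneg b) ha

lemma forall_abs_add_mul_sub_le_abs_iff {x m : ℝ} :
    (∀ y, |x| + m * (y - x) ≤ |y|) ↔ |m| ≤ 1 ∧ (x ≠ 0 → m = x.sign) := by
  constructor
  · intro h
    have hbound : |m| ≤ 1 := by
      have hright : |x| + m * 1 ≤ |x| + |1| := by
        simpa using (h (x + 1)).trans (abs_add_le x 1)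
      have hleft : |x| + m * -1 ≤ |x| + |-1| := by
        simpa using (h (x + -1)).trans (abs_add_le x (-1))
      rw [abs_neg, abs_one] at hleft
      rw [abs_one] at hright
      exact abs_le.2 ⟨by linarith, by linarith⟩
    refine ⟨hbound, fun hx ↦ mul_right_cancel₀ hx ?_⟩
    have hge : |x| ≤ m * x := by simpa [← sub_eq_add_neg] using h 0
    rw [sign_mul_self_eq_abs]
    exact (mul_le_abs_of_abs_le_one hbound).antisymm hge
  · rintro ⟨hbound, hsign⟩ y
    have hx : m * x = |x| := by
      rcases eq_or_ne x 0 with rfl | hx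
      · simp
      · rw [hsign hx, sign_mul_self_eq_abs]
    rw [mul_sub, hx, add_sub_cancel]
    exact mul_le_abs_of_abs_le_one hbound

open scoped ComplexOrder in
theorem eventually_posDef_of_isHermitian {n 𝕜 : Type*} [Finite n] [RCLike 𝕜] {A : Matrix n n 𝕜}
    (hA : A.PosDef) : ∀ᶠ B in 𝓝 A, B.IsHermitian → B.PosDef := by
  have := Fintype.ofFinite n
  have hsphere : ∀ᶠ B in 𝓝 A, ∀ x ∈ Metric.sphere (0 : n → 𝕜) 1,
      0 < RCLike.re (star x ⬝ᵥ B *ᵥ x) := by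
    refine (isCompact_sphere _ _).eventually_forall_of_forall_eventually fun x hx ↦ ?_
    have hcont : Continuous fun q : Matrix n n 𝕜 × (n → 𝕜) ↦
        RCLike.re (star q.2 ⬝ᵥ q.1 *ᵥ q.2) :=
      RCLike.continuous_re.comp <|
        continuous_snd.star.dotProduct (continuous_fst.matrix_mulVec continuous_snd)
    exact hcont.continuousAt.eventually_const_lt
      (hA.re_dotProduct_pos (ne_zero_of_mem_unit_sphere ⟨x, hx⟩))
  filter_upwards [hsphere] with B hB hherm
  refine .of_dotProduct_mulVec_pos hherm fun x hx ↦ ?_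
  have hnorm : 0 < ‖x‖ := norm_pos_iff.2 hx
  have hpos : 0 < RCLike.re (star x ⬝ᵥ B *ᵥ x) := by
    have := hB (‖x‖⁻¹ • x) (by simp [norm_smul, hnorm.ne'])
    simp only [star_smul, star_trivial, mulVec_smul, smul_dotProduct, dotProduct_smul,
      RCLike.smul_re] at this
    exact pos_of_mul_pos_right (pos_of_mul_pos_right this (by positivity)) (by positivity)
  exact RCLike.pos_iff.2 ⟨hpos, hherm.im_star_dotProduct_mulVec_self x⟩

open scoped ComplexOrder in
lemma eventually_posDef_add_smul {n 𝕜 : Type*} [Finite n] [RCLike 𝕜] {A V : Matrix n n 𝕜}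
    (hA : A.PosDef) (hV : V.IsHermitian) : ∀ᶠ t : ℝ in 𝓝 0, (A + t • V).PosDef := by
  have hline : Filter.Tendsto (fun t : ℝ ↦ A + t • V) (𝓝 0) (𝓝 A) := by
    have hcont : Continuous fun t : ℝ ↦ A + t • V := by fun_prop
    simpa using hcont.tendsto 0
  filter_upwards [hline.eventually (eventually_posDef_of_isHermitian hA)] with t ht
  exact ht (hA.isHermitian.add (hV.smul (IsSelfAdjoint.all t)))

section LogDet

variable {n : Type*} [Fintype n] [DecidableEq n]

lemma log_det_le_trace_sub_card {A : Matrix n n ℝ} (hA : A.PosDef) :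
    Real.log A.det ≤ A.trace - Fintype.card n := by
  rw [hA.isHermitian.det_eq_prod_eigenvalues, hA.isHermitian.trace_eq_sum_eigenvalues]
  simp only [RCLike.ofReal_real_eq_id, id]
  rw [Real.log_prod fun i _ ↦ (hA.eigenvalues_pos i).ne']
  calc ∑ i, Real.log (hA.isHermitian.eigenvalues i)
      ≤ ∑ i, (hA.isHermitian.eigenvalues i - 1) :=
        sum_le_sum fun i _ ↦ Real.log_le_sub_one_of_pos (hA.eigenvalues_pos i)
    _ = ∑ i, hA.isHermitian.eigenvalues i - Fintype.card n := by simp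

open scoped MatrixOrder in
theorem log_det_le_log_det_add_trace_inv_mul_sub {A B : Matrix n n ℝ} (hA : A.PosDef)
    (hB : B.PosDef) : Real.log B.det ≤ Real.log A.det + (A⁻¹ * (B - A)).trace := by
  obtain ⟨C, hC, hCA⟩ :=
    CStarAlgebra.isStrictlyPositive_iff_eq_star_mul_self.1 hA.inv.isStrictlyPositive
  rw [star_eq_conjTranspose] at hCA
  have hM : (C * B * Cᴴ).PosDef := hB.mul_mul_conjTranspose_same (vecMul_injective_of_isUnit hC)
  have hdet : (C * B * Cᴴ).det = A.det⁻¹ * B.det := by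
    rw [← Ring.inverse_eq_inv', ← det_nonsing_inv, hCA]
    simp only [det_mul]
    ring
  have htrace : (C * B * Cᴴ).trace = (A⁻¹ * B).trace := by rw [trace_mul_cycle, hCA]
  have hlog := log_det_le_trace_sub_card hM
  rw [hdet, htrace, Real.log_mul (inv_ne_zero hA.det_pos.ne') hB.det_pos.ne', Real.log_inv] at hlog
  rw [Matrix.mul_sub, trace_sub, nonsing_inv_mul _ hA.det_pos.ne'.isUnit, trace_one]
  linarith

lemma hasDerivAt_det_one_add_smul {𝕜 : Type*} [NontriviallyNormedField 𝕜] (M : Matrix n n 𝕜) :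
    HasDerivAt (fun t : 𝕜 ↦ (1 + t • M).det) M.trace 0 := by
  have heval (t : 𝕜) : (1 + t • M).det =
      (det (1 + (Polynomial.X : Polynomial 𝕜) • M.map Polynomial.C)).eval t := by
    rw [← Polynomial.coe_evalRingHom, RingHom.map_det]
    congr 1
    ext i j
    by_cases hij : i = j <;> simp [hij, mul_comm t]
  simp only [heval]
  rw [← derivative_det_one_add_X_smul]
  exact Polynomial.hasDerivAt _ 0

theorem hasLineDerivAt_det {𝕜 : Type*} [NontriviallyNormedField 𝕜] {A : Matrix n n 𝕜}
    (hA : IsUnit A.det) (V : Matrix n n 𝕜) :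
    HasLineDerivAt 𝕜 det (A.det * (A⁻¹ * V).trace) A V := by
  have hfactor (t : 𝕜) : (A + t • V).det = A.det * (1 + t • (A⁻¹ * V)).det := by
    rw [← det_mul, Matrix.mul_add, Matrix.mul_one, Matrix.mul_smul,
      mul_nonsing_inv_cancel_left _ _ hA]
  simp only [HasLineDerivAt, hfactor]
  exact (hasDerivAt_det_one_add_smul (A⁻¹ * V)).const_mul A.det

theorem hasLineDerivAt_log_det {A : Matrix n n ℝ} (hA : A.det ≠ 0) (V : Matrix n n ℝ) :
    HasLineDerivAt ℝ (fun M ↦ Real.log M.det) (A⁻¹ * V).trace A V := by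
  have hlog := (hasLineDerivAt_det hA.isUnit V).log (by simpa using hA)
  simpa [HasLineDerivAt, hA] using hlog

/-- The differentiable part `-log det Θ + trace (S * Θ)` of the graphical lasso objective, namely
the Gaussian negative log-likelihood of the precision matrix `Θ` up to constants. -/
noncomputable def gaussianNegLogLik (S Θ : Matrix n n ℝ) : ℝ :=
  -Real.log Θ.det + (S * Θ).trace

theorem hasLineDerivAt_gaussianNegLogLik (S : Matrix n n ℝ) {A : Matrix n n ℝ} (hA : A.det ≠ 0)
    (V : Matrix n n ℝ) :
    HasLineDerivAt ℝ (gaussianNegLogLik S) (-((A⁻¹ - S) * V).trace) A V := by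
  have htrace : HasLineDerivAt ℝ (fun M ↦ (S * M).trace) (S * V).trace A V := by
    have := ((hasDerivAt_id (0 : ℝ)).mul_const (S * V).trace).const_add (S * A).trace
    simpa [HasLineDerivAt, Matrix.mul_add] using this
  refine ((hasLineDerivAt_log_det hA V).neg.add htrace).congr_deriv ?_
  rw [Matrix.sub_mul, trace_sub]
  ring

theorem gaussianNegLogLik_add_le (S : Matrix n n ℝ) {A B : Matrix n n ℝ} (hA : A.PosDef)
    (hB : B.PosDef) :
    gaussianNegLogLik S A + -((A⁻¹ - S) * (B - A)).trace ≤ gaussianNegLogLik S B := by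
  have := log_det_le_log_det_add_trace_inv_mul_sub hA hB
  rw [gaussianNegLogLik, gaussianNegLogLik, Matrix.sub_mul, trace_sub, Matrix.mul_sub S, trace_sub]
  linarith

end LogDet

lemma convex_setOf_isSymm {n : Type*} : Convex ℝ {A : Matrix n n ℝ | A.IsSymm} :=
  fun _ hA _ hB a b _ _ _ ↦ (hA.smul a).add (hB.smul b)

section OffDiagL1

variable {n : Type*} [Fintype n] [DecidableEq n]

/-- The graphical lasso penalty: the sum of the absolute values of the off-diagonal entries. Each
unordered pair of indices is counted twice. -/
def offDiagL1 (A : Matrix n n ℝ) : ℝ :=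
  ∑ i, ∑ j, if i ≠ j then |A i j| else 0

/-- `Φ` is a subgradient of `offDiagL1` at `A` on the space of symmetric matrices, for the trace
inner product: only symmetric matrices `B` are tested. -/
def IsOffDiagL1Subgradient (Φ A : Matrix n n ℝ) : Prop :=
  ∀ B : Matrix n n ℝ, B.IsSymm → offDiagL1 A + (Φ * (B - A)).trace ≤ offDiagL1 B

lemma convexOn_offDiagL1 {s : Set (Matrix n n ℝ)} (hs : Convex ℝ s) : ConvexOn ℝ s offDiagL1 := by
  refine ⟨hs, fun A _ B _ a b ha hb _ ↦ ?_⟩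
  simp only [offDiagL1, smul_eq_mul, mul_sum, ← sum_add_distrib]
  refine sum_le_sum fun i _ ↦ sum_le_sum fun j _ ↦ ?_
  split_ifs
  · calc |a * A i j + b * B i j| ≤ |a * A i j| + |b * B i j| := abs_add_le _ _
      _ = a * |A i j| + b * |B i j| := by rw [abs_mul, abs_mul, abs_of_nonneg ha, abs_of_nonneg hb]
  · simp

lemma offDiagL1_add_single (A : Matrix n n ℝ) (i j : n) (t : ℝ) :
    offDiagL1 (A + single i j t) = offDiagL1 A + if i ≠ j then |A i j + t| - |A i j| else 0 := by
  have hentry (a b : n) : (if a ≠ b then |(A + single i j t) a b| else 0) =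
      (if a ≠ b then |A a b| else 0) +
        if i = a then if j = b then if i ≠ j then |A i j + t| - |A i j| else 0 else 0 else 0 := by
    by_cases hab : i = a ∧ j = b
    · obtain ⟨rfl, rfl⟩ := hab
      by_cases hij : i = j <;> simp [hij]
    · simp [← ite_and, hab]
  simp only [offDiagL1, hentry, sum_add_distrib]
  simp

lemma offDiagL1_add_single_add_single {A : Matrix n n ℝ} (hA : A.IsSymm) (i j : n) (t : ℝ) :
    offDiagL1 (A + (single i j t + single j i t)) =
      offDiagL1 A + if i ≠ j then 2 * (|A i j + t| - |A i j|) else 0 := by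
  rw [← add_assoc, offDiagL1_add_single, offDiagL1_add_single]
  by_cases hij : i = j
  · simp [hij]
  · have hji : (A + single i j t) j i = A i j := by simp [hij, hA.apply i j]
    rw [hji, if_pos hij, if_pos (Ne.symm hij), if_pos hij, two_mul, add_assoc]

lemma trace_mul_single_add_single {Φ : Matrix n n ℝ} (hΦ : Φ.IsSymm) (i j : n) (t : ℝ) :
    (Φ * (single i j t + single j i t)).trace = 2 * (Φ i j * t) := by
  rw [Matrix.mul_add, trace_add, trace_mul_single, trace_mul_single, hΦ.apply i j,
    op_smul_eq_mul, two_mul]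

theorem isOffDiagL1Subgradient_iff {Φ A : Matrix n n ℝ} (hΦ : Φ.IsSymm) (hA : A.IsSymm) :
    IsOffDiagL1Subgradient Φ A ↔ (∀ i, Φ i i = 0) ∧ (∀ i j, i ≠ j → |Φ i j| ≤ 1) ∧
      ∀ i j, i ≠ j → A i j ≠ 0 → Φ i j = Real.sign (A i j) := by
  constructor
  · intro h
    have hsingle (i j : n) (t : ℝ) :
        2 * (Φ i j * t) ≤ if i ≠ j then 2 * (|A i j + t| - |A i j|) else 0 := by
      have hsymm : (single i j t + single j i t).IsSymm := by
        simp [IsSymm, transpose_add, add_comm]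
      have := h _ (hA.add hsymm)
      rw [add_sub_cancel_left, trace_mul_single_add_single hΦ,
        offDiagL1_add_single_add_single hA] at this
      linarith
    have hoff (i j : n) (hij : i ≠ j) : |Φ i j| ≤ 1 ∧ (A i j ≠ 0 → Φ i j = Real.sign (A i j)) := by
      refine forall_abs_add_mul_sub_le_abs_iff.1 fun y ↦ ?_
      have := hsingle i j (y - A i j)
      rw [if_pos hij, add_sub_cancel] at this
      linarith
    refine ⟨fun i ↦ ?_, fun i j hij ↦ (hoff i j hij).1, fun i j hij ↦ (hoff i j hij).2⟩
    have hsq : 2 * (Φ i i * Φ i i) ≤ 0 := by simpa using hsingle i i (Φ i i)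
    exact mul_self_eq_zero.1 (le_antisymm (by linarith) (mul_self_nonneg _))
  · rintro ⟨hdiag, hbound, hsign⟩ B hB
    simp only [offDiagL1, trace, diag_apply, mul_apply, ← sum_add_distrib]
    refine sum_le_sum fun i _ ↦ sum_le_sum fun j _ ↦ ?_
    rw [(hB.sub hA).apply i j, Matrix.sub_apply]
    split_ifs with hij
    · exact forall_abs_add_mul_sub_le_abs_iff.2 ⟨hbound i j hij, hsign i j hij⟩ (B i j)
    · obtain rfl := not_not.1 hij
      simp [hdiag]

end OffDiagL1

lemma glObj_eq_gaussianNegLogLik_add {p : ℕ} (S : Matrix (Fin p) (Fin p) ℝ) (l : ℝ) :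
    glObj S l = fun Θ ↦ gaussianNegLogLik S Θ + l * offDiagL1 Θ :=
  rfl

theorem isMinOn_glObj_iff {p : ℕ} (S : Matrix (Fin p) (Fin p) ℝ) {A : Matrix (Fin p) (Fin p) ℝ}
    {l : ℝ} (hl : 0 < l) (hA : A.PosDef) :
    IsMinOn (glObj S l) {Θ | Θ.PosDef} A ↔ IsOffDiagL1Subgradient (l⁻¹ • (A⁻¹ - S)) A := by
  have hfeasible (B : Matrix (Fin p) (Fin p) ℝ) (hB : B.IsSymm) :
      ∀ᶠ t : ℝ in 𝓝[>] 0, A + t • (B - A) ∈ {Θ : Matrix (Fin p) (Fin p) ℝ | Θ.PosDef} :=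
    nhdsWithin_le_nhds <| eventually_posDef_add_smul hA <|
      (isHermitian_iff_isSymm.2 hB).sub hA.isHermitian
  have hconvex : ConvexOn ℝ {B : Matrix (Fin p) (Fin p) ℝ | B.IsSymm} fun B ↦ l * offDiagL1 B :=
    (convexOn_offDiagL1 convex_setOf_isSymm).smul hl.le
  rw [glObj_eq_gaussianNegLogLik_add,
    isMinOn_add_iff_forall_sub_lineDeriv_le (s := {Θ : Matrix (Fin p) (Fin p) ℝ | Θ.PosDef})
      (w := {B | B.IsSymm}) (f' := fun V ↦ -((A⁻¹ - S) * V).trace)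
      hA (fun _ hΘ ↦ isHermitian_iff_isSymm.1 hΘ.isHermitian) hfeasible
      (fun B _ ↦ hasLineDerivAt_gaussianNegLogLik S hA.det_pos.ne' (B - A))
      (fun B hB ↦ gaussianNegLogLik_add_le S hA hB)
      hconvex]
  refine forall₂_congr fun B _ ↦ Iff.trans ?_ (mul_le_mul_iff_right₀ hl)
  rw [smul_mul_assoc, trace_smul, smul_eq_mul, mul_add, mul_inv_cancel_left₀ hl.ne', sub_neg_eq_add]

/-- Optimality condition for the graphical lasso: `Θ*` minimizes the objective over
symmetric positive definite matrices iff `(Θ*)⁻¹ - S - λΦ = 0` for some symmetric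
subgradient matrix `Φ`. -/
theorem stmt12 {p : ℕ} (S : Matrix (Fin p) (Fin p) ℝ) (hS : S.IsSymm)
    (l : ℝ) (hl : 0 < l)
    (Θs : Matrix (Fin p) (Fin p) ℝ) (hΘs : Θs.PosDef) :
    (∀ Θ : Matrix (Fin p) (Fin p) ℝ, Θ.PosDef → glObj S l Θs ≤ glObj S l Θ) ↔
      ∃ Φ : Matrix (Fin p) (Fin p) ℝ, Φ.IsSymm ∧ (∀ i, Φ i i = 0) ∧
        (∀ i j, i ≠ j → |Φ i j| ≤ 1) ∧
        (∀ i j, i ≠ j → Θs i j ≠ 0 → Φ i j = Real.sign (Θs i j)) ∧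
        Θs⁻¹ - S - l • Φ = 0 := by
  have hΦ : (l⁻¹ • (Θs⁻¹ - S)).IsSymm :=
    ((isHermitian_iff_isSymm.1 hΘs.inv.isHermitian).sub hS).smul l⁻¹
  have hstationary (Φ : Matrix (Fin p) (Fin p) ℝ) :
      Θs⁻¹ - S - l • Φ = 0 ↔ Φ = l⁻¹ • (Θs⁻¹ - S) := by
    rw [sub_eq_zero, eq_inv_smul_iff₀ hl.ne', eq_comm]
  refine (isMinOn_glObj_iff S hl hΘs).trans ?_
  rw [isOffDiagL1Subgradient_iff hΦ (isHermitian_iff_isSymm.1 hΘs.isHermitian)]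
  simp only [hstationary]
  constructor
  · rintro ⟨hdiag, hbound, hsign⟩
    exact ⟨_, hΦ, hdiag, hbound, hsign, rfl⟩
  · rintro ⟨_, -, hdiag, hbound, hsign, rfl⟩
    exact ⟨hdiag, hbound, hsign⟩
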